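/- Let 𝐏 = 𝐇(n; n_1,…,n_t) be a hierarchical poset with index set 𝒩 = {(i,j) : 1 ≤ i ≤ t, 1 ≤ j ≤ n_i} and order (i,j) < (i',j') iff i < i', and let 𝒢 = ∏_{i=1}^t ∏_{j=1}^{n_i} G_{i,j} where the G_{i,j} are nontrivial finite abelian groups with |G_{i,1}| = ⋯ = |G_{i,n_i}| for each i. Then the dual partition of 𝒫_𝐏 equals 𝒫_𝐏̄, i.e., (𝒫_𝐏)̂ = 𝒫_𝐏̄ as partitions of 𝒢̂. Consequently 𝒫_𝐏 is Fourier-reflexive. -/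

import Mathlib

open Finset
open scoped Classical

variable {ι : Type*} [Fintype ι] [DecidableEq ι]
  {H : ι → Type*} [∀ i, AddCommGroup (H i)] [∀ i, Fintype (H i)]

/-- The sum of the character `χ` over the block of the partition `P` indexed by `c`. -/
noncomputable def blockSum {G : Type*} [AddCommGroup G] [Fintype G]
    (P : Setoid G) (χ : AddChar G ℂ) (c : Quotient P) : ℂ :=
  ∑ g : G, if Quotient.mk P g = c then χ g else 0

/-- The dual partition `P̂` of the character group. -/
noncomputable def dualSetoid {G : Type*} [AddCommGroup G] [Fintype G]
    (P : Setoid G) : Setoid (AddChar G ℂ) :=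
  Setoid.ker (blockSum P)

/-- The sum `Σ_{χ ∈ Q_c} χ(g)` over the block of the dual partition indexed by `c`. -/
noncomputable def dualBlockSum {G : Type*} [AddCommGroup G] [Fintype G]
    (P : Setoid G) (g : G) (c : Quotient (dualSetoid P)) : ℂ :=
  ∑ᶠ χ : AddChar G ℂ, if Quotient.mk (dualSetoid P) χ = c then χ g else 0

/-- The bidual partition `P̂̂`, a partition of `G` via the canonical identification of the
double character group with `G`. -/
noncomputable def bidualSetoid {G : Type*} [AddCommGroup G] [Fintype G]
    (P : Setoid G) : Setoid G :=
  Setoid.ker (dualBlockSum P)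

/-- The `i`-th component of a character of a product group, under the canonical
identification of the character group of a product with the product of the character
groups. -/
noncomputable def comp1 (χ : AddChar (∀ i, H i) ℂ) (i : ι) : AddChar (H i) ℂ :=
  χ.compAddMonoidHom (AddMonoidHom.single H i)

/-- The poset weight `wt_𝐏(g) = |⟨supp(g)⟩|` of `g ∈ G₁ × ⋯ × Gₙ`: the size of the ideal
generated by the support of `g` in the poset whose order relation is `le`. -/
noncomputable def posetWt (le : ι → ι → Prop) (g : ∀ i, H i) : ℕ :=
  (Finset.univ.filter fun j : ι => ∃ i : ι, g i ≠ 0 ∧ le j i).card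

/-- The dual-poset weight `wt_𝐏̄(χ) = |⟨supp(χ)⟩_𝐏̄|` of a character `χ` of `G₁ × ⋯ × Gₙ`:
the size of the ideal generated, in the dual (reversed) poset, by the support of `χ`
(the set of indices where the component of `χ` is not the principal character). -/
noncomputable def dualPosetWt (le : ι → ι → Prop) (χ : AddChar (∀ i, H i) ℂ) : ℕ :=
  (Finset.univ.filter fun j : ι => ∃ i : ι, comp1 χ i ≠ 1 ∧ le i j).card

section Ideals

variable {L : Type*} [LinearOrder L] {lev : ι → L} {s s' : Finset ι} {l : L}

/-- The size of the ideal generated by `s` in the hierarchical poset with level function `lev`. -/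
noncomputable def idealCard (lev : ι → L) (s : Finset ι) : ℕ :=
  #{j : ι | ∃ i ∈ s, j = i ∨ lev j < lev i}

theorem idealCard_eq_add (hs : ∀ i ∈ s, lev i ≤ l) (hne : ∃ i ∈ s, lev i = l) :
    idealCard lev s = #{j : ι | lev j < l} + #{i ∈ s | lev i = l} := by
  rw [← card_union_of_disjoint, idealCard]
  · congr 1
    ext j
    simp only [mem_filter, mem_univ, true_and, mem_union]
    constructor
    · rintro ⟨i, hi, rfl | h⟩
      · rcases (hs j hi).lt_or_eq with h | h
        · exact Or.inl h
        · exact Or.inr ⟨hi, h⟩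
      · exact Or.inl (h.trans_le (hs i hi))
    · rintro (h | ⟨h, -⟩)
      · obtain ⟨i, hi, rfl⟩ := hne
        exact ⟨i, hi, Or.inr h⟩
      · exact ⟨j, h, Or.inl rfl⟩
  · rw [Finset.disjoint_left]
    intro j hj hj'
    simp only [mem_filter, mem_univ, true_and] at hj hj'
    exact hj.ne hj'.2

theorem exists_max_level {κ : Type*} {lev : κ → L} {s : Finset κ} (hs : s.Nonempty) :
    ∃ l, (∀ i ∈ s, lev i ≤ l) ∧ ∃ i ∈ s, lev i = l := by
  obtain ⟨i, hi, h⟩ := exists_max_image s lev hs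
  exact ⟨lev i, h, i, hi, rfl⟩

@[simp]
theorem idealCard_empty : idealCard lev (∅ : Finset ι) = 0 := by
  simp [idealCard]

theorem idealCard_eq_zero_iff : idealCard lev s = 0 ↔ s = ∅ := by
  refine ⟨fun h => ?_, fun h => by rw [h, idealCard_empty]⟩
  by_contra hs
  obtain ⟨i, hi⟩ := nonempty_iff_ne_empty.2 hs
  rw [idealCard, card_eq_zero] at h
  have : i ∈ (∅ : Finset ι) := by
    rw [← h]
    simpa using ⟨i, hi, Or.inl rfl⟩
  simp at this

theorem idealCard_lt_of_max_lt {l' : L} (hs : ∀ i ∈ s, lev i ≤ l) (hne : ∃ i ∈ s, lev i = l)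
    (hs' : ∀ i ∈ s', lev i ≤ l') (hl : l' < l) : idealCard lev s' < idealCard lev s := by
  refine card_lt_card ⟨fun j hj => ?_, fun h => ?_⟩
  · simp only [mem_filter, mem_univ, true_and] at hj ⊢
    obtain ⟨i, hi, rfl⟩ := hne
    obtain ⟨k, hk, rfl | hjk⟩ := hj
    · exact ⟨i, hi, Or.inr ((hs' j hk).trans_lt hl)⟩
    · exact ⟨i, hi, Or.inr (hjk.trans ((hs' k hk).trans_lt hl))⟩
  · obtain ⟨i, hi, rfl⟩ := hne
    have := @h i (by simpa using ⟨i, hi, Or.inl rfl⟩)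
    simp only [mem_filter, mem_univ, true_and] at this
    obtain ⟨k, hk, rfl | hjk⟩ := this
    · exact (hs' i hk).not_gt hl
    · exact (hjk.trans_le (hs' k hk)).not_gt hl

theorem idealCard_eq_iff (hs : ∀ i ∈ s, lev i ≤ l) (hne : ∃ i ∈ s, lev i = l) :
    idealCard lev s' = idealCard lev s ↔
      (∀ i ∈ s', lev i ≤ l) ∧ #{i ∈ s' | lev i = l} = #{i ∈ s | lev i = l} := by
  constructor
  · intro h
    have hs'0 : s'.Nonempty := by
      rw [nonempty_iff_ne_empty]
      intro h0
      rw [idealCard_eq_zero_iff.2 h0, eq_comm, idealCard_eq_zero_iff] at h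
      obtain ⟨i, hi, -⟩ := hne
      simp [h] at hi
    obtain ⟨l', hl', hne'⟩ := exists_max_level (lev := lev) hs'0
    rcases lt_trichotomy l' l with hlt | rfl | hlt
    · exact absurd h (idealCard_lt_of_max_lt hs hne hl' hlt).ne
    · refine ⟨hl', ?_⟩
      rw [idealCard_eq_add hs hne, idealCard_eq_add hl' hne'] at h
      exact Nat.add_left_cancel h
    · exact absurd h (idealCard_lt_of_max_lt hl' hne' hs hlt).ne'
  · rintro ⟨hs', hc⟩
    have hne' : ∃ i ∈ s', lev i = l := by
      obtain ⟨i, hi, hil⟩ := hne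
      have : 0 < #{i ∈ s' | lev i = l} := by
        rw [hc]
        exact card_pos.2 ⟨i, by simp [hi, hil]⟩
      obtain ⟨j, hj⟩ := card_pos.1 this
      exact ⟨j, by simpa using hj⟩
    rw [idealCard_eq_add hs hne, idealCard_eq_add hs' hne', hc]

end Ideals

section Support

variable {κ : Type*} [Fintype κ] {α : κ → Type*} [∀ i, Zero (α i)]

/-- The set of indices at which `a` is nonzero. -/
noncomputable def supp (a : ∀ i, α i) : Finset κ := {i | a i ≠ 0}

@[simp]
theorem mem_supp {a : ∀ i, α i} {i : κ} : i ∈ supp a ↔ a i ≠ 0 := by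
  simp [supp]

end Support

section Pairing

open Polynomial

variable {L : Type*} [LinearOrder L] {lev : ι → L} {α β : ι → Type*}
  [∀ i, Zero (α i)] [∀ i, Fintype (α i)] {e : ∀ i, α i → β i → ℂ}

/-- The sum of the product pairing with `b` over the elements of poset weight `m`. -/
noncomputable def weightSum (lev : ι → L) (e : ∀ i, α i → β i → ℂ) (b : ∀ i, β i) (m : ℕ) : ℂ :=
  ∑ a : ∀ i, α i, if idealCard lev (supp a) = m then ∏ i, e i (a i) (b i) else 0

/-- The weight enumerator of the elements supported on the levels up to `l`, where the exponent
counts the nonzero entries on level `l`, twisted by the product pairing with `b`. -/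
noncomputable def levelPoly (lev : ι → L) (e : ∀ i, α i → β i → ℂ) (b : ∀ i, β i) (l : L) :
    ℂ[X] :=
  ∏ i, ∑ a : α i,
    (if a = 0 then 1 else if l < lev i then 0 else if lev i = l then X else 1) * C (e i a (b i))

theorem levelPoly_coeff (b : ∀ i, β i) (l : L) (k : ℕ) :
    (levelPoly lev e b l).coeff k =
      ∑ a : ∀ i, α i, if (∀ i ∈ supp a, lev i ≤ l) ∧ #{i ∈ supp a | lev i = l} = k
        then ∏ i, e i (a i) (b i) else 0 := by
  rw [levelPoly, prod_univ_sum, Fintype.piFinset_univ, finsetSum_coeff]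
  refine sum_congr rfl fun a _ => ?_
  rw [prod_mul_distrib, ← map_prod, coeff_mul_C]
  by_cases h : ∀ i ∈ supp a, lev i ≤ l
  · have : (∏ i, (if a i = 0 then (1 : ℂ[X]) else
        if l < lev i then 0 else if lev i = l then X else 1)) =
        X ^ #{i ∈ supp a | lev i = l} := by
      rw [← prod_const, prod_filter, supp, prod_filter]
      refine prod_congr rfl fun i _ => ?_
      by_cases hi : a i = 0
      · simp [hi]
      · simp [hi, (h i (by simpa using hi)).not_gt]
    rw [this, coeff_X_pow]
    by_cases hk : #{i ∈ supp a | lev i = l} = k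
    · rw [if_pos hk.symm, if_pos ⟨h, hk⟩, one_mul]
    · rw [if_neg (Ne.symm hk), if_neg fun h' => hk h'.2, zero_mul]
  · rw [if_neg (fun h' => h h'.1)]
    push Not at h
    obtain ⟨i, hi, hl⟩ := h
    rw [prod_eq_zero (mem_univ i), coeff_zero, zero_mul]
    rw [if_neg (by simpa using hi), if_pos hl]

theorem weightSum_eq_levelPoly_coeff (b : ∀ i, β i) {l : L} {a : ∀ i, α i}
    (ha : ∀ i ∈ supp a, lev i ≤ l) (hne : ∃ i ∈ supp a, lev i = l) :
    weightSum lev e b (idealCard lev (supp a)) =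
      (levelPoly lev e b l).coeff #{i ∈ supp a | lev i = l} := by
  rw [weightSum, levelPoly_coeff]
  refine sum_congr rfl fun a' _ => ?_
  simp only [idealCard_eq_iff ha hne]

theorem sum_ite_mul_C {A : Type*} [Zero A] [Fintype A] {f : A → ℂ} (hf : f 0 = 1) (p : ℂ[X]) :
    ∑ a, (if a = 0 then 1 else p) * C (f a) = 1 - p + p * C (∑ a, f a) := by
  have h : ∀ a, (if a = 0 then 1 else p) * C (f a) = (if a = 0 then 1 - p else 0) + p * C (f a) := by
    intro a
    split_ifs with h0
    · simp [h0, hf]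
    · simp
  rw [sum_congr rfl fun a _ => h a, sum_add_distrib, sum_ite_eq' univ, if_pos (mem_univ _),
    ← mul_sum, ← map_sum]

variable [∀ i, Zero (β i)]

/-- A family of pairings satisfying the orthogonality relations of the pairings between finite
abelian groups and their character groups, where the size depends on the level only. -/
structure IsLeveledPairing (lev : ι → L) (e : ∀ i, α i → β i → ℂ) : Prop where
  zero_left : ∀ i b, e i 0 b = 1
  sum_left : ∀ i b, ∑ a, e i a b = if b = 0 then (Fintype.card (α i) : ℂ) else 0
  card_eq : ∀ i j, lev i = lev j → Fintype.card (α i) = Fintype.card (α j)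

theorem IsLeveledPairing.levelPoly_eq_zero (he : IsLeveledPairing lev e) {b : ∀ i, β i} {l : L}
    {i : ι} (hi : i ∈ supp b) (hl : lev i < l) : levelPoly lev e b l = 0 := by
  refine prod_eq_zero (mem_univ i) ?_
  rw [sum_ite_mul_C (f := fun a => e i a (b i)) (he.zero_left i _), he.sum_left]
  simp [hl.not_gt, hl.ne, mem_supp.1 hi]

theorem IsLeveledPairing.levelPoly_eq (he : IsLeveledPairing lev e) {b : ∀ i, β i} {l : L}
    (hb : ∀ i ∈ supp b, l ≤ lev i) {c : ℂ} (hc : ∀ i, lev i = l → (Fintype.card (α i) : ℂ) = c) :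
    levelPoly lev e b l = C (∏ i with lev i < l, (Fintype.card (α i) : ℂ)) *
      ((1 + C (c - 1) * X) ^ (#{i : ι | lev i = l} - #{i ∈ supp b | lev i = l}) *
        (1 - X) ^ #{i ∈ supp b | lev i = l}) := by
  have hcard : #{i : ι | lev i = l} - #{i ∈ supp b | lev i = l} =
      #{i : ι | lev i = l ∧ b i = 0} := by
    rw [← card_sdiff_of_subset (filter_subset_filter _ (subset_univ _))]
    congr 1
    ext i
    simp only [mem_sdiff, mem_filter, mem_univ, true_and, mem_supp]
    tauto
  have hsupp : (supp b).filter (fun i => lev i = l) =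
      univ.filter (fun i => lev i = l ∧ b i ≠ 0) := by
    ext i
    simp [and_comm]
  rw [hcard, hsupp, map_prod, ← prod_const, ← prod_const, prod_filter, prod_filter, prod_filter,
    ← prod_mul_distrib, ← prod_mul_distrib, levelPoly]
  refine prod_congr rfl fun i _ => ?_
  rw [sum_ite_mul_C (f := fun a => e i a (b i)) (he.zero_left i _), he.sum_left]
  rcases lt_trichotomy (lev i) l with h | h | h
  · have hbi : b i = 0 := by
      by_contra h0
      exact (hb i (mem_supp.2 h0)).not_gt h
    simp [h, h.not_gt, h.ne, hbi]
  · by_cases hbi : b i = 0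
    · simp only [h, hbi, lt_irrefl, if_true, if_false, ne_eq, not_true_eq_false, and_self,
        and_false, hc i h, map_sub, map_one]
      ring
    · simp [h, hbi]
  · simp [h, h.not_gt, h.ne']

theorem coeff_one_pow_of_coeff_zero {p : ℂ[X]} (hp : p.coeff 0 = 1) (n : ℕ) :
    (p ^ n).coeff 1 = n * p.coeff 1 := by
  induction n with
  | zero => simp [coeff_one]
  | succ n ih =>
    rw [pow_succ, mul_coeff_one, ih, hp, coeff_zero_eq_eval_zero (p ^ n), eval_pow,
      ← coeff_zero_eq_eval_zero, hp]
    push_cast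
    ring

theorem coeff_one_krawtchouk (A c : ℂ) (m w : ℕ) :
    (C A * ((1 + C (c - 1) * X) ^ m * (1 - X) ^ w)).coeff 1 = A * (m * (c - 1) - w) := by
  rw [coeff_C_mul, mul_coeff_one, coeff_one_pow_of_coeff_zero (by simp),
    coeff_one_pow_of_coeff_zero (by simp), coeff_zero_eq_eval_zero, coeff_zero_eq_eval_zero]
  simp only [coeff_add, coeff_sub, coeff_one, coeff_C_mul, coeff_X_one, eval_pow, eval_add,
    eval_sub, eval_mul, eval_one, eval_C, eval_X]
  norm_num
  left
  ring

theorem IsLeveledPairing.card_level_eq [∀ i, Nontrivial (α i)] (he : IsLeveledPairing lev e)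
    {b b' : ∀ i, β i} (h : ∀ m, weightSum lev e b m = weightSum lev e b' m) {i₀ : ι}
    (hb : ∀ i ∈ supp b, lev i₀ ≤ lev i) (hb' : ∀ i ∈ supp b', lev i₀ ≤ lev i) :
    #{i ∈ supp b | lev i = lev i₀} = #{i ∈ supp b' | lev i = lev i₀} := by
  obtain ⟨x, hx⟩ := exists_ne (0 : α i₀)
  have hsupp : supp (Pi.single i₀ x : ∀ i, α i) = {i₀} := by
    ext i
    by_cases hi : i = i₀
    · subst hi
      simpa using hx
    · simp [hi]
  have hcoeff : ∀ b : ∀ i, β i, weightSum lev e b (idealCard lev {i₀}) =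
      (levelPoly lev e b (lev i₀)).coeff 1 := by
    intro b
    have := weightSum_eq_levelPoly_coeff (lev := lev) (e := e) b (l := lev i₀)
      (a := Pi.single i₀ x) (by simp [hsupp]) (by simp [hsupp])
    rwa [hsupp, filter_true_of_mem (by simp), card_singleton] at this
  have hc : ∀ i, lev i = lev i₀ → (Fintype.card (α i) : ℂ) = Fintype.card (α i₀) :=
    fun i hi => by rw [he.card_eq i i₀ hi]
  have key := h (idealCard lev {i₀})
  rw [hcoeff, hcoeff, he.levelPoly_eq hb hc, he.levelPoly_eq hb' hc, coeff_one_krawtchouk,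
    coeff_one_krawtchouk] at key
  have hA : (∏ i with lev i < lev i₀, (Fintype.card (α i) : ℂ)) ≠ 0 :=
    prod_ne_zero_iff.2 fun i _ => Nat.cast_ne_zero.2 Fintype.card_ne_zero
  have hle : ∀ b : ∀ i, β i, #{i ∈ supp b | lev i = lev i₀} ≤ #{i : ι | lev i = lev i₀} :=
    fun b => card_le_card (filter_subset_filter _ (subset_univ _))
  replace key := mul_left_cancel₀ hA key
  rw [Nat.cast_sub (hle b), Nat.cast_sub (hle b')] at key
  have hq : (Fintype.card (α i₀) : ℂ) ≠ 0 := Nat.cast_ne_zero.2 Fintype.card_ne_zero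
  have : (Fintype.card (α i₀) : ℂ) * #{i ∈ supp b | lev i = lev i₀} =
      Fintype.card (α i₀) * #{i ∈ supp b' | lev i = lev i₀} := by
    linear_combination -key
  exact_mod_cast mul_left_cancel₀ hq this

theorem IsLeveledPairing.levelPoly_congr (he : IsLeveledPairing lev e) {b b' : ∀ i, β i}
    (h : idealCard (OrderDual.toDual ∘ lev) (supp b) =
      idealCard (OrderDual.toDual ∘ lev) (supp b')) {i₀ : ι} :
    levelPoly lev e b (lev i₀) = levelPoly lev e b' (lev i₀) := by
  have hc : ∀ i, lev i = lev i₀ → (Fintype.card (α i) : ℂ) = Fintype.card (α i₀) :=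
    fun i hi => by rw [he.card_eq i i₀ hi]
  rcases (supp b').eq_empty_or_nonempty with h0 | h0
  · have h1 : supp b = ∅ := by
      rwa [h0, idealCard_empty, idealCard_eq_zero_iff] at h
    rw [he.levelPoly_eq (by simp [h1]) hc, he.levelPoly_eq (by simp [h0]) hc, h0, h1]
  obtain ⟨l, hl, hne⟩ := exists_max_level (lev := OrderDual.toDual ∘ lev) h0
  obtain ⟨hl', hcard⟩ := (idealCard_eq_iff hl hne).1 h
  have hne' : ∃ i ∈ supp b, (OrderDual.toDual ∘ lev) i = l := by
    obtain ⟨i, hi, hil⟩ := hne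
    obtain ⟨j, hj⟩ := card_pos.1 (hcard ▸ card_pos.2 ⟨i, mem_filter.2 ⟨hi, hil⟩⟩)
    exact ⟨j, by simpa using hj⟩
  obtain ⟨l, rfl⟩ := OrderDual.toDual.surjective l
  simp only [Function.comp_apply, OrderDual.toDual_le_toDual, EmbeddingLike.apply_eq_iff_eq]
    at hl hl' hne hne' hcard
  by_cases hlt : l < lev i₀
  · obtain ⟨i, hi, rfl⟩ := hne
    obtain ⟨j, hj, hij⟩ := hne'
    rw [he.levelPoly_eq_zero hi hlt, he.levelPoly_eq_zero hj (hij ▸ hlt)]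
  · rw [not_lt] at hlt
    have hcount : #{i ∈ supp b | lev i = lev i₀} = #{i ∈ supp b' | lev i = lev i₀} := by
      rcases hlt.lt_or_eq with hlt | heq
      · rw [filter_false_of_mem fun i hi => (hlt.trans_le (hl' i hi)).ne',
          filter_false_of_mem fun i hi => (hlt.trans_le (hl i hi)).ne']
      · rw [heq, hcard]
    rw [he.levelPoly_eq (fun i hi => hlt.trans (hl' i hi)) hc,
      he.levelPoly_eq (fun i hi => hlt.trans (hl i hi)) hc, hcount]

/-- Two elements have the same sums over all level sets of the poset weight if and only if they
have the same dual-poset weight. -/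
theorem IsLeveledPairing.weightSum_eq_iff [∀ i, Nontrivial (α i)] (he : IsLeveledPairing lev e)
    {b b' : ∀ i, β i} :
    (∀ m, weightSum lev e b m = weightSum lev e b' m) ↔
      idealCard (OrderDual.toDual ∘ lev) (supp b) =
        idealCard (OrderDual.toDual ∘ lev) (supp b') := by
  constructor
  · intro h
    rcases (supp b ∪ supp b').eq_empty_or_nonempty with h0 | h0
    · rw [union_eq_empty] at h0
      rw [h0.1, h0.2]
    obtain ⟨i₀, hi₀, hmin⟩ := exists_min_image _ lev h0
    have hb : ∀ i ∈ supp b, lev i₀ ≤ lev i := fun i hi => hmin i (mem_union_left _ hi)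
    have hb' : ∀ i ∈ supp b', lev i₀ ≤ lev i := fun i hi => hmin i (mem_union_right _ hi)
    have hcard := he.card_level_eq h hb hb'
    rcases mem_union.1 hi₀ with hi | hi
    · refine ((idealCard_eq_iff (l := OrderDual.toDual (lev i₀)) ?_ ?_).2 ⟨?_, ?_⟩).symm
      · simpa using hb
      · exact ⟨i₀, hi, rfl⟩
      · simpa using hb'
      · simpa using hcard.symm
    · refine (idealCard_eq_iff (l := OrderDual.toDual (lev i₀)) ?_ ?_).2 ⟨?_, ?_⟩
      · simpa using hb'
      · exact ⟨i₀, hi, rfl⟩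
      · simpa using hb
      · simpa using hcard
  · intro h m
    by_cases hm : ∃ a : ∀ i, α i, idealCard lev (supp a) = m
    · obtain ⟨a, rfl⟩ := hm
      rcases (supp a).eq_empty_or_nonempty with h0 | h0
      · simp only [h0, weightSum, idealCard_empty, idealCard_eq_zero_iff]
        refine sum_congr rfl fun a' _ => ?_
        split_ifs with ha'
        · have : ∀ i, a' i = 0 := fun i => by
            by_contra hi
            have := mem_supp.2 hi
            simp [ha'] at this
          simp [this, he.zero_left]
        · rfl
      · obtain ⟨l, hl, hne⟩ := exists_max_level (lev := lev) h0
        rw [weightSum_eq_levelPoly_coeff b hl hne, weightSum_eq_levelPoly_coeff b' hl hne]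
        obtain ⟨i, -, rfl⟩ := hne
        rw [he.levelPoly_congr h]
    · push Not at hm
      simp [weightSum, hm]

end Pairing

section Characters

variable {ι : Type*} [Fintype ι] [DecidableEq ι]
  {H : ι → Type*} [∀ i, AddCommGroup (H i)]

theorem apply_eq_prod_comp1 (χ : AddChar (∀ i, H i) ℂ) (g : ∀ i, H i) :
    χ g = ∏ i, comp1 χ i (g i) := by
  conv_lhs => rw [← univ_sum_single g]
  exact map_prod χ.toMonoidHom (fun i => Multiplicative.ofAdd (Pi.single i (g i))) univ

theorem comp1_bijective :
    Function.Bijective (comp1 : AddChar (∀ i, H i) ℂ → ∀ i, AddChar (H i) ℂ) := by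
  constructor
  · intro χ χ' h
    ext g
    rw [apply_eq_prod_comp1, apply_eq_prod_comp1, h]
  · intro ψ
    refine ⟨⟨fun g => ∏ i, ψ i (g i), by simp, fun g g' => ?_⟩, ?_⟩
    · simp [AddChar.map_add_eq_mul, prod_mul_distrib]
    · funext i
      ext x
      change ∏ j, ψ j ((Pi.single i x : ∀ j, H j) j) = ψ i x
      rw [prod_eq_single i]
      · simp
      · intro j _ hj
        simp [hj]
      · simp

end Characters

theorem forall_block_sum_eq_iff {X : Type*} [Fintype X] (S : Setoid X) (F : X → ℕ)
    (hS : S = Setoid.ker F) (u v : X → ℂ) :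
    (∀ c : Quotient S, (∑ x, if Quotient.mk S x = c then u x else 0) =
        ∑ x, if Quotient.mk S x = c then v x else 0) ↔
      ∀ m, (∑ x, if F x = m then u x else 0) = ∑ x, if F x = m then v x else 0 := by
  subst hS
  have hq : ∀ x y, Quotient.mk (Setoid.ker F) x = Quotient.mk (Setoid.ker F) y ↔ F x = F y :=
    fun x y => Quotient.eq
  constructor
  · intro h m
    by_cases hm : ∃ x, F x = m
    · obtain ⟨y, rfl⟩ := hm
      simpa only [hq] using h (Quotient.mk _ y)
    · push Not at hm
      simp [hm]
  · intro h c
    obtain ⟨y, rfl⟩ := Quotient.exists_rep c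
    simpa only [hq] using h (F y)

/-- For the hierarchical poset `𝐇(n; n₁, …, n_t)` on the index set
`𝒩 = {(i,j) : 1 ≤ i ≤ t, 1 ≤ j ≤ nᵢ}` (with `(i,j) < (i',j')` iff `i < i'`) and
`𝒢 = ∏ᵢ∏ⱼ G_{i,j}` with `|G_{i,1}| = ⋯ = |G_{i,nᵢ}|` for each level `i`, the dual of the
partition of `𝒢` into level sets of the poset weight `wt_𝐏` is the partition of `𝒢̂` into
level sets of the dual-poset weight `wt_𝐏̄`; consequently the poset-weight partition is
Fourier-reflexive. -/
theorem hierarchical_poset_duality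
    (t : ℕ) (nl : Fin t → ℕ) (hnl : ∀ i, 0 < nl i)
    (H : (Σ i : Fin t, Fin (nl i)) → Type*)
    [∀ s, AddCommGroup (H s)] [∀ s, Fintype (H s)] [∀ s, Nontrivial (H s)]
    (hcard : ∀ (i : Fin t) (j j' : Fin (nl i)),
      Nat.card (H ⟨i, j⟩) = Nat.card (H ⟨i, j'⟩)) :
    dualSetoid (Setoid.ker
        (posetWt (H := H) (fun x y : Σ i : Fin t, Fin (nl i) => x = y ∨ x.1 < y.1))) =
      Setoid.ker (dualPosetWt (H := H)
        (fun x y : Σ i : Fin t, Fin (nl i) => x = y ∨ x.1 < y.1)) ∧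
    bidualSetoid (Setoid.ker
        (posetWt (H := H) (fun x y : Σ i : Fin t, Fin (nl i) => x = y ∨ x.1 < y.1))) =
      Setoid.ker
        (posetWt (H := H) (fun x y : Σ i : Fin t, Fin (nl i) => x = y ∨ x.1 < y.1)) := by
  set lev : (Σ i : Fin t, Fin (nl i)) → Fin t := Sigma.fst
  have hcardH : ∀ s s' : (Σ i : Fin t, Fin (nl i)), lev s = lev s' →
      Fintype.card (H s) = Fintype.card (H s') := by
    rintro ⟨i, j⟩ ⟨i', j'⟩ (rfl : i = i')
    simpa using hcard i j j'
  have hwt : ∀ g : ∀ s, H s, posetWt (fun x y => x = y ∨ x.1 < y.1) g =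
      idealCard lev (supp g) := by
    intro g
    simp [posetWt, idealCard, lev]
  have hdwt : ∀ χ : AddChar (∀ s, H s) ℂ, dualPosetWt (fun x y => x = y ∨ x.1 < y.1) χ =
      idealCard (OrderDual.toDual ∘ lev) (supp (comp1 χ)) := by
    intro χ
    simp [dualPosetWt, idealCard, lev, AddChar.one_eq_zero, eq_comm]
  have he : IsLeveledPairing lev (fun s (x : H s) (ψ : AddChar (H s) ℂ) => ψ x) :=
    ⟨by simp, fun s ψ => by rw [AddChar.sum_eq_ite], hcardH⟩
  have hnt : ∀ s, Nontrivial (AddChar (H s) ℂ) := by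
    intro s
    rw [← Fintype.one_lt_card_iff_nontrivial, AddChar.card_eq]
    exact Fintype.one_lt_card
  have he' : IsLeveledPairing (OrderDual.toDual ∘ lev)
      (fun s (ψ : AddChar (H s) ℂ) (x : H s) => ψ x) :=
    ⟨by simp, fun s x => by rw [AddChar.sum_apply_eq_ite, AddChar.card_eq],
      fun s s' h => by simpa using hcardH s s' (by simpa using h)⟩
  have hdual : dualSetoid (Setoid.ker (posetWt (H := H) (fun x y => x = y ∨ x.1 < y.1))) =
      Setoid.ker (dualPosetWt (H := H) (fun x y => x = y ∨ x.1 < y.1)) := by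
    ext χ χ'
    rw [dualSetoid, Setoid.ker_def, Setoid.ker_def, hdwt, hdwt, ← he.weightSum_eq_iff, funext_iff]
    simp only [blockSum]
    rw [forall_block_sum_eq_iff _ _ rfl]
    simp only [hwt, weightSum, ← apply_eq_prod_comp1]
  refine ⟨hdual, ?_⟩
  ext g g'
  rw [bidualSetoid, Setoid.ker_def, Setoid.ker_def, hwt, hwt]
  have hswap := he'.weightSum_eq_iff (b := g) (b' := g')
  have hsum : ∀ (g : ∀ s, H s) (m : ℕ), weightSum (OrderDual.toDual ∘ lev)
      (fun s (ψ : AddChar (H s) ℂ) (x : H s) => ψ x) g m =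
      ∑ χ : AddChar (∀ s, H s) ℂ,
        if dualPosetWt (fun x y => x = y ∨ x.1 < y.1) χ = m then χ g else 0 := by
    intro g m
    rw [weightSum]
    refine (Fintype.sum_bijective comp1 comp1_bijective _ _ fun χ => ?_).symm
    rw [hdwt, apply_eq_prod_comp1]
  simp only [hsum] at hswap
  rw [funext_iff]
  simp only [dualBlockSum, finsum_eq_sum_of_fintype]
  rw [forall_block_sum_eq_iff _ _ hdual]
  exact hswap
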